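/- (A modulus 4k identity.) Let q be a complex number with 0 < |q| < 1, and let k ≥ 2 and 1 ≤ i ≤ k be integers. Then ∑_{s_1 ≥ s_2 ≥ ⋯ ≥ s_k ≥ 0} (-q;q)_{2 s_2} · q^{s_1^2 + 2(s_3^2 + ⋯ + s_k^2) + s_1 - s_2 + 2(s_{i+1} + ⋯ + s_k)} / [(q^2;q^2)_{s_1-s_2} (q^2;q^2)_{s_2-s_3} ⋯ (q^2;q^2)_{s_{k-1}-s_k} (q^2;q^2)_{s_k}] = (q^{4k}, q^{2i-1}, q^{4k-2i+1}; q^{4k})_∞ / (q;q)_∞, where the term 2(s_{i+1} + ⋯ + s_k) is empty (equal to 0) when i = k. -/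

import Mathlib

/-- The finite q-Pochhammer symbol `(x;q)_n = ∏_{j=0}^{n-1} (1 - x q^j)`. -/
noncomputable def qPoch (x q : ℂ) (n : ℕ) : ℂ := ∏ j ∈ Finset.range n, (1 - x * q ^ j)

/-- The infinite q-Pochhammer symbol `(x;q)_∞ = ∏_{j=0}^{∞} (1 - x q^j)`. -/
noncomputable def qPochInf (x q : ℂ) : ℂ := ∏' j : ℕ, (1 - x * q ^ j)

section
open Finset

lemma qPoch_zero (x q : ℂ) : qPoch x q 0 = 1 := by simp [qPoch]

lemma qPoch_succ (x q : ℂ) (n : ℕ) : qPoch x q (n + 1) = qPoch x q n * (1 - x * q ^ n) := by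
  simp [qPoch, Finset.prod_range_succ]

lemma qPoch_succ_left (x q : ℂ) (n : ℕ) :
    qPoch x q (n + 1) = (1 - x) * qPoch (x * q) q n := by
  simp only [qPoch, Finset.prod_range_succ']
  rw [mul_comm]
  congr 1
  · simp
  · refine Finset.prod_congr rfl fun j _ => ?_
    ring

lemma qPoch_add (x q : ℂ) (m n : ℕ) :
    qPoch x q (m + n) = qPoch x q m * qPoch (x * q ^ m) q n := by
  simp only [qPoch, Finset.prod_range_add]
  congr 1
  refine Finset.prod_congr rfl fun j _ => ?_
  ring

lemma one_sub_ne (x q : ℂ) (hx : ‖x‖ < 1) (hq : ‖q‖ < 1) (n : ℕ) : 1 - x * q ^ n ≠ 0 := by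
  intro h
  have h2 : x * q ^ n = 1 := by linear_combination -h
  have h3 : ‖x * q ^ n‖ < 1 := by
    rw [norm_mul, norm_pow]
    have : ‖q‖ ^ n ≤ 1 := pow_le_one₀ (norm_nonneg _) hq.le
    nlinarith [norm_nonneg x]
  rw [h2] at h3
  simp at h3

lemma one_sub_pow_ne (q : ℂ) (hq : ‖q‖ < 1) (n : ℕ) : 1 - q ^ (n + 1) ≠ 0 := by
  have := one_sub_ne q q hq hq n
  rwa [pow_succ'] 

lemma qPoch_ne (x q : ℂ) (hx : ‖x‖ < 1) (hq : ‖q‖ < 1) (n : ℕ) : qPoch x q n ≠ 0 :=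
  Finset.prod_ne_zero_iff.mpr fun j _ => one_sub_ne x q hx hq j

lemma PP_succ (q : ℂ) (n : ℕ) : qPoch q q (n + 1) = qPoch q q n * (1 - q ^ (n + 1)) := by
  rw [qPoch_succ, pow_succ']

lemma pascal_sum (q : ℂ) (hq : ‖q‖ < 1) (M : ℕ) (c : ℕ → ℂ) :
    (1 - q ^ (M + 1)) * ∑ m ∈ range (M + 2), c m / (qPoch q q m * qPoch q q (M + 1 - m)) =
    ∑ m ∈ range (M + 1), (q ^ m * c m + c (m + 1)) / (qPoch q q m * qPoch q q (M - m)) := by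
  have hP := qPoch_ne q q hq hq
  have h1 : ∀ m ∈ range (M + 2),
      (1 - q ^ (M + 1)) * (c m / (qPoch q q m * qPoch q q (M + 1 - m))) =
      q ^ m * (1 - q ^ (M + 1 - m)) * c m / (qPoch q q m * qPoch q q (M + 1 - m)) +
      (1 - q ^ m) * c m / (qPoch q q m * qPoch q q (M + 1 - m)) := by
    intro m hm
    have hm' : m ≤ M + 1 := by simp at hm; omega
    have : q ^ (M + 1) = q ^ m * q ^ (M + 1 - m) := by rw [← pow_add]; congr 1; omega
    rw [this]; ring
  rw [Finset.mul_sum, Finset.sum_congr rfl h1, Finset.sum_add_distrib,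
    Finset.sum_range_succ, Finset.sum_range_succ' (fun m => (1 - q ^ m) * c m / _)]
  simp only [Nat.sub_self, pow_zero, sub_self, mul_zero, zero_mul, zero_div, add_zero]
  rw [← Finset.sum_add_distrib]
  refine Finset.sum_congr rfl fun m hm => ?_
  have hm' : m ≤ M := by simp at hm; omega
  obtain ⟨d, rfl⟩ := Nat.exists_eq_add_of_le hm'
  have e1 : m + d + 1 - m = d + 1 := by omega
  have e2 : m + d + 1 - (m + 1) = d := by omega
  have e3 : m + d - m = d := by omega
  rw [e1, e2, e3, PP_succ, PP_succ]
  have := hP m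
  have := hP d
  have := one_sub_pow_ne q hq m
  have := one_sub_pow_ne q hq d
  field_simp

lemma vander (q : ℂ) (hq : ‖q‖ < 1) (M s : ℕ) :
    ∑ m ∈ range (M + 1), q ^ (m * (m + s)) / qPoch q q (m + s) / (qPoch q q m * qPoch q q (M - m))
      = 1 / (qPoch q q M * qPoch q q (M + s)) := by
  have hP := qPoch_ne q q hq hq
  induction M generalizing s with
  | zero => simp [qPoch_zero]
  | succ M ih =>
    have hne := one_sub_pow_ne q hq M
    apply mul_left_cancel₀ hne
    rw [pascal_sum q hq]
    have : ∀ m ∈ range (M + 1), (q ^ m * (q ^ (m * (m + s)) / qPoch q q (m + s)) +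
        q ^ ((m + 1) * (m + 1 + s)) / qPoch q q (m + 1 + s)) / (qPoch q q m * qPoch q q (M - m)) =
        q ^ (m * (m + (s + 1))) / qPoch q q (m + (s + 1)) / (qPoch q q m * qPoch q q (M - m)) := by
      intro m _
      congr 1
      have e : m + 1 + s = m + s + 1 := by omega
      have e' : m + (s + 1) = m + s + 1 := by omega
      rw [e, e', PP_succ]
      have := hP (m + s)
      have := one_sub_pow_ne q hq (m + s)
      field_simp
      ring
    rw [Finset.sum_congr rfl this, ih, PP_succ]
    have := hP M
    rw [show M + (s + 1) = M + 1 + s by omega]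
    have := hP (M + 1 + s)
    field_simp

lemma qgauss_fin (q : ℂ) (hq : ‖q‖ < 1) (M : ℕ) (x y : ℂ) :
    ∑ m ∈ range (M + 1), ((-y) ^ m * q ^ (m.choose 2) * qPoch x q m *
      qPoch (x * y * q ^ m) q (M - m)) / (qPoch q q m * qPoch q q (M - m))
      = qPoch y q M / qPoch q q M := by
  have hP := qPoch_ne q q hq hq
  induction M generalizing y with
  | zero => simp [qPoch_zero]
  | succ M ih =>
    have hne := one_sub_pow_ne q hq M
    apply mul_left_cancel₀ hne
    rw [pascal_sum q hq M (fun m => (-y) ^ m * q ^ (m.choose 2) * qPoch x q m *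
      qPoch (x * y * q ^ m) q (M + 1 - m))]
    have : ∀ m ∈ range (M + 1), (q ^ m * ((-y) ^ m * q ^ (m.choose 2) * qPoch x q m *
        qPoch (x * y * q ^ m) q (M + 1 - m)) +
        (-y) ^ (m + 1) * q ^ ((m + 1).choose 2) * qPoch x q (m + 1) *
        qPoch (x * y * q ^ (m + 1)) q (M + 1 - (m + 1))) / (qPoch q q m * qPoch q q (M - m)) =
        (1 - y) * (((-(y * q)) ^ m * q ^ (m.choose 2) * qPoch x q m *
        qPoch (x * (y * q) * q ^ m) q (M - m)) / (qPoch q q m * qPoch q q (M - m))) := by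
      intro m hm
      have hm' : m ≤ M := by simp at hm; omega
      rw [← mul_div_assoc]
      congr 1
      rw [show M + 1 - m = (M - m) + 1 by omega, show M + 1 - (m + 1) = M - m by omega,
        qPoch_succ_left (x * y * q ^ m), qPoch_succ x, Nat.choose_succ_succ' m 1, Nat.choose_one_right,
        show x * y * q ^ m * q = x * y * q ^ (m + 1) by ring,
        show x * (y * q) * q ^ m = x * y * q ^ (m + 1) by ring,
        show -(y * q) = (-y) * q by ring, mul_pow]
      ring
    rw [Finset.sum_congr rfl this, ← Finset.mul_sum, ih, PP_succ, qPoch_succ_left]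
    have := hP M
    field_simp

lemma tri_sum (N : ℕ) (f : ℕ → ℕ → ℂ) :
    ∑ n ∈ range (N + 1), ∑ r ∈ range (n + 1), f n r =
    ∑ r ∈ range (N + 1), ∑ m ∈ range (N - r + 1), f (r + m) r := by
  induction N with
  | zero => simp
  | succ N ih =>
    rw [Finset.sum_range_succ, ih, Finset.sum_range_succ _ (N + 1), Finset.sum_range_succ _ (N + 1)]
    simp only [Nat.sub_self, zero_add, Finset.sum_range_one, add_zero]
    rw [← add_assoc, ← Finset.sum_add_distrib]
    congr 1
    refine Finset.sum_congr rfl fun r hr => ?_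
    have hr' : r ≤ N := by simp at hr; omega
    rw [show N + 1 - r + 1 = (N - r + 1) + 1 by omega, Finset.sum_range_succ _ (N - r + 1)]
    congr 2
    omega

lemma bailey_step (q : ℂ) (hq : ‖q‖ < 1) (N s : ℕ) (A : ℕ → ℂ) :
    ∑ n ∈ range (N + 1), q ^ (n ^ 2 + s * n) / qPoch q q (N - n) *
      ∑ r ∈ range (n + 1), A r / (qPoch q q (n - r) * qPoch q q (n + r + s)) =
    ∑ r ∈ range (N + 1), A r * q ^ (r ^ 2 + s * r) / (qPoch q q (N - r) * qPoch q q (N + r + s)) := by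
  simp only [Finset.mul_sum]
  rw [tri_sum]
  refine Finset.sum_congr rfl fun r hr => ?_
  have hr' : r ≤ N := by simp at hr; omega
  have hv := vander q hq (N - r) (2 * r + s)
  rw [show N - r + (2 * r + s) = N + r + s by omega] at hv
  rw [mul_div_assoc, div_eq_mul_one_div (q ^ (r ^ 2 + s * r)), ← hv, Finset.mul_sum, Finset.mul_sum]
  refine Finset.sum_congr rfl fun m hm => ?_
  rw [show N - (r + m) = N - r - m by omega, show r + m - r = m by omega,
    show r + m + r + s = m + (2 * r + s) by omega,
    show (r + m) ^ 2 + s * (r + m) = m * (m + (2 * r + s)) + (r ^ 2 + s * r) by ring, pow_add _ (m * _)]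
  simp only [div_eq_mul_inv, mul_inv]
  ring

/-- folding of the coefficients -/
noncomputable def qfold (q : ℂ) (a : ℕ → ℂ) : ℕ → ℂ
  | 0 => a 0
  | r + 1 => a (r + 1) - q ^ (2 * r + 1) * a r

lemma transfer (q : ℂ) (hq : ‖q‖ < 1) (n : ℕ) (a : ℕ → ℂ) :
    ∑ r ∈ range (n + 1), a r * (1 - q ^ (2 * r + 1)) / (qPoch q q (n - r) * qPoch q q (n + r + 1)) =
    ∑ r ∈ range (n + 1), qfold q a r / (qPoch q q (n - r) * qPoch q q (n + r)) := by
  have hP := qPoch_ne q q hq hq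
  have h1 : ∀ r ∈ range n, a r * (1 - q ^ (2 * r + 1)) / (qPoch q q (n - r) * qPoch q q (n + r + 1)) =
      a r / (qPoch q q (n - r) * qPoch q q (n + r)) - q ^ (2 * r + 1) * a r /
        (qPoch q q (n - (r + 1)) * qPoch q q (n + (r + 1))) := by
    intro r hr
    have hr' : r < n := by simpa using hr
    obtain ⟨d, rfl⟩ := Nat.exists_eq_add_of_lt hr'
    rw [show r + d + 1 - r = d + 1 by omega, show r + d + 1 - (r + 1) = d by omega,
      show r + d + 1 + (r + 1) = r + d + 1 + r + 1 by omega, PP_succ _ d, PP_succ _ (r + d + 1 + r)]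
    have := hP d
    have := hP (r + d + 1 + r)
    have := one_sub_pow_ne q hq d
    have := one_sub_pow_ne q hq (r + d + 1 + r)
    field_simp
    ring
  rw [Finset.sum_range_succ, Finset.sum_congr rfl h1, Finset.sum_sub_distrib]
  rw [Finset.sum_range_succ' (fun r => qfold q a r / _)]
  simp only [qfold, sub_div]
  rw [Finset.sum_sub_distrib]
  have h2 := Finset.sum_range_succ (fun r => a r / (qPoch q q (n - r) * qPoch q q (n + r))) n
  rw [Finset.sum_range_succ'] at h2
  have h3 : a n * (1 - q ^ (2 * n + 1)) / (qPoch q q (n - n) * qPoch q q (n + n + 1)) =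
      a n / (qPoch q q (n - n) * qPoch q q (n + n)) := by
    rw [PP_succ, ← two_mul]
    have := hP (n - n)
    have := hP (2 * n)
    have := one_sub_pow_ne q hq (2 * n)
    field_simp
  rw [h3]
  linear_combination -h2

lemma choose_two_add (n r : ℕ) : (n + r).choose 2 = n.choose 2 + n * r + r.choose 2 := by
  induction r with
  | zero => simp
  | succ r ih =>
    rw [← add_assoc, Nat.choose_succ_succ' _ 1, Nat.choose_one_right, ih,
      Nat.choose_succ_succ' _ 1, Nat.choose_one_right]
    ring

lemma two_choose (r : ℕ) : 2 * r.choose 2 + r = r ^ 2 := by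
  induction r with
  | zero => simp
  | succ r ih =>
    rw [Nat.choose_succ_succ' _ 1, Nat.choose_one_right]
    nlinarith

/-- coefficients of the triple product -/
noncomputable def jc (p u v : ℂ) (r : ℕ) : ℂ :=
  if r = 0 then 1 else (-1) ^ r * p ^ (r.choose 2) * (u ^ r + v ^ r)

lemma jtp_fin (p u v : ℂ) (hp : ‖p‖ < 1) (hu : u ≠ 0) (hp0 : p ≠ 0) (huv : u * v = p) (n : ℕ) :
    ∑ r ∈ range (n + 1), jc p u v r / (qPoch p p (n - r) * qPoch p p (n + r)) =
    qPoch u p n * qPoch v p n / qPoch p p (2 * n) := by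
  have hP := qPoch_ne p p hp hp
  have hv : v = p / u := by rw [← huv]; field_simp
  set y : ℂ := u / p ^ n with hy
  have hyp : y * p ^ n = u := by rw [hy]; field_simp
  have hy0 : y ≠ 0 := by rw [hy]; positivity
  set T : ℕ → ℂ := fun m => (-y) ^ m * p ^ (m.choose 2) with hT
  have hT0 : ∀ m, T m ≠ 0 := fun m => by
    simp only [hT]; exact mul_ne_zero (pow_ne_zero _ (neg_ne_zero.mpr hy0)) (pow_ne_zero _ hp0)
  have key := qgauss_fin p hp (2 * n) 0 y
  have hz : ∀ m, qPoch 0 p m = 1 := fun m => by simp [qPoch]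
  simp only [zero_mul, hz, mul_one] at key
  have hTadd : ∀ r, T (n + r) = T n * ((-1) ^ r * p ^ (r.choose 2) * u ^ r) := by
    intro r
    simp only [hT]
    rw [choose_two_add, pow_add, pow_add, pow_add, ← hyp, mul_pow, ← pow_mul, neg_pow y r]
    ring
  have hTsub : ∀ j ≤ n, T (n - j) = T n * ((-1) ^ j * p ^ (j.choose 2) * v ^ j) := by
    intro j hj
    obtain ⟨d, rfl⟩ := Nat.exists_eq_add_of_le hj
    rw [show j + d - j = d by omega]
    simp only [hT]
    have e1 := two_choose j
    have e2 : p ^ ((j + d).choose 2) * p ^ (j.choose 2) * p ^ j = p ^ (d.choose 2) * p ^ ((j + d) * j) := by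
      rw [← pow_add, ← pow_add, ← pow_add]
      congr 1
      rw [choose_two_add]
      nlinarith
    rw [hv, div_pow, ← hyp, mul_pow, ← pow_mul, neg_pow y (j + d), neg_pow y d, pow_add y,
      pow_add (-1 : ℂ)]
    have e3 : ((-1 : ℂ) ^ j) * (-1) ^ j = 1 := by rw [← mul_pow]; simp
    field_simp
    linear_combination (-(-1 : ℂ)^ (2 * j)) * e2 - p ^ (d.choose 2) * p ^ ((j + d) * j) * e3
  have hprod : qPoch y p n = T n * qPoch v p n := by
    have : ∀ m ≤ n, qPoch (u / p ^ m) p m = (-(u / p ^ m)) ^ m * p ^ (m.choose 2) * qPoch v p m := by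
      intro m _
      induction m with
      | zero => simp [qPoch_zero]
      | succ m ih =>
        rw [qPoch_succ_left, show u / p ^ (m + 1) * p = u / p ^ m by field_simp; ring, ih (by omega),
          qPoch_succ, Nat.choose_succ_succ' _ 1, Nat.choose_one_right, pow_add p m (m.choose _), hv]
        have : (-(u / p ^ (m + 1))) ^ (m + 1) * p ^ m = (-(u / p ^ m)) ^ m * (-(u / p ^ (m + 1))) := by
          rw [pow_succ, show -(u / p ^ m) = -(u / p ^ (m + 1)) * p by field_simp; ring, mul_pow]
          ring
        have h2 : (1 - u / p ^ (m + 1)) = -(u / p ^ (m + 1)) * (1 - p / u * p ^ m) := by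
          field_simp
          ring
        rw [h2]
        linear_combination (-(p ^ (m.choose 2) * qPoch (p / u) p m * (1 - p / u * p ^ m))) * this
    exact this n le_rfl
  have hprod2 : qPoch y p (2 * n) = T n * (qPoch u p n * qPoch v p n) := by
    rw [two_mul, qPoch_add, hyp, hprod]; ring
  rw [hprod2, show 2 * n + 1 = n + (n + 1) by omega, Finset.sum_range_add, ← Finset.sum_range_reflect] at key
  apply mul_left_cancel₀ (hT0 n)
  rw [← mul_div_assoc, ← key]
  rw [Finset.sum_range_succ', Finset.sum_range_succ', mul_add, Finset.mul_sum, ← add_assoc,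
    ← Finset.sum_add_distrib]
  congr 1
  · refine Finset.sum_congr rfl fun r hr => ?_
    have hr' : r < n := by simpa using hr
    have h1 := hTadd (r + 1)
    have h2 := hTsub (r + 1) (by omega)
    simp only [hT] at h1 h2
    rw [show n - 1 - r = n - (r + 1) by omega, h1, h2]
    rw [show 2 * n - (n - (r + 1)) = n + (r + 1) by omega,
      show 2 * n - (n + (r + 1)) = n - (r + 1) by omega]
    simp only [jc, Nat.succ_ne_zero, if_false, hT]
    simp only [div_eq_mul_inv, mul_inv]
    ring
  · simp only [jc, if_true, hT, add_zero, Nat.sub_zero, show 2 * n - n = n by omega, mul_one_div]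

/-- the coefficients of the Bailey pairs -/
noncomputable def al (Q : ℂ) (j r : ℕ) : ℂ := (-1) ^ r * Q ^ (r.choose 2 + j * (r ^ 2 + r))

lemma unit_pair (Q : ℂ) (hQ : ‖Q‖ < 1) (hQ0 : Q ≠ 0) (n : ℕ) :
    ∑ r ∈ range (n + 1), al Q 0 r * (1 - Q ^ (2 * r + 1)) /
      (qPoch Q Q (n - r) * qPoch Q Q (n + r + 1)) = if n = 0 then 1 else 0 := by
  rw [transfer Q hQ]
  have h := jtp_fin Q 1 Q hQ one_ne_zero hQ0 (one_mul _) n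
  have h1 : ∀ r, qfold Q (al Q 0) r = jc Q 1 Q r := by
    intro r
    cases r with
    | zero => simp [qfold, al, jc]
    | succ r =>
      simp only [qfold, al, jc, Nat.succ_ne_zero, if_false]
      rw [Nat.choose_succ_succ' _ 1, Nat.choose_one_right]
      ring
  simp only [h1, h]
  cases n with
  | zero => simp [qPoch_zero]
  | succ n => simp [qPoch_succ_left 1]

/-- iterated inner sums -/
noncomputable def ff (Q : ℂ) (J : ℕ) : ℕ → ℕ → ℂ
  | 0, n => if n = 0 then 1 else 0
  | j + 1, n => ∑ b ∈ range (n + 1), Q ^ (b ^ 2 + (if j ≤ J then 1 else 0) * b) / qPoch Q Q (n - b) *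
      ff Q J j b

lemma ff_D (Q : ℂ) (hQ : ‖Q‖ < 1) (hQ0 : Q ≠ 0) (J j : ℕ) (hj : j ≤ J + 1) (n : ℕ) :
    ff Q J j n = ∑ r ∈ range (n + 1), al Q j r * (1 - Q ^ (2 * r + 1)) /
      (qPoch Q Q (n - r) * qPoch Q Q (n + r + 1)) := by
  induction j generalizing n with
  | zero => rw [unit_pair Q hQ hQ0]; rfl
  | succ j ih =>
    simp only [ff, if_pos (show j ≤ J by omega)]
    have h2 := bailey_step Q hQ n 1 (fun r => al Q j r * (1 - Q ^ (2 * r + 1)))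
    simp only [ih (by omega)]
    rw [h2]
    refine Finset.sum_congr rfl fun r _ => ?_
    congr 1
    simp only [al]
    rw [show r.choose 2 + (j + 1) * (r ^ 2 + r) = r.choose 2 + j * (r ^ 2 + r) + (r ^ 2 + 1 * r) by ring,
      pow_add _ _ (r ^ 2 + 1 * r)]
    ring

lemma ff_E (Q : ℂ) (hQ : ‖Q‖ < 1) (hQ0 : Q ≠ 0) (J j : ℕ) (n : ℕ) :
    ff Q J (J + 1 + j) n = ∑ r ∈ range (n + 1), qfold Q (al Q (J + 1)) r * Q ^ (j * r ^ 2) /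
      (qPoch Q Q (n - r) * qPoch Q Q (n + r)) := by
  induction j generalizing n with
  | zero => simp only [add_zero, zero_mul, pow_zero, mul_one]; rw [ff_D Q hQ hQ0 _ _ le_rfl, transfer Q hQ]
  | succ j ih =>
    rw [← add_assoc]
    simp only [ff, if_neg (show ¬ (J + 1 + j ≤ J) by omega)]
    have h2 := bailey_step Q hQ n 0 (fun r => qfold Q (al Q (J + 1)) r * Q ^ (j * r ^ 2))
    simp only [ih]
    simp only [add_zero] at h2
    rw [h2]
    refine Finset.sum_congr rfl fun r _ => ?_
    congr 1
    ring

open Filter Topology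

lemma summable_aux (x q : ℂ) (hq : ‖q‖ < 1) : Summable fun j : ℕ => ‖-(x * q ^ j)‖ := by
  simp only [norm_neg, norm_mul, norm_pow]
  exact (summable_geometric_of_lt_one (norm_nonneg _) hq).mul_left _

lemma qPoch_tendsto (x q : ℂ) (hq : ‖q‖ < 1) :
    Tendsto (fun n => qPoch x q n) atTop (𝓝 (qPochInf x q)) := by
  have h := (multipliable_one_add_of_summable (summable_aux x q hq)).hasProd.tendsto_prod_nat
  simpa only [← sub_eq_add_neg, qPoch, qPochInf] using h

lemma qPochInf_ne (x q : ℂ) (hx : ‖x‖ < 1) (hq : ‖q‖ < 1) : qPochInf x q ≠ 0 := by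
  have := tprod_one_add_ne_zero_of_summable (f := fun j : ℕ => -(x * q ^ j))
    (fun j => by rw [← sub_eq_add_neg]; exact one_sub_ne x q hx hq j) (summable_aux x q hq)
  simpa only [← sub_eq_add_neg, qPochInf] using this

lemma qPochInf_split (x q : ℂ) (hq : ‖q‖ < 1) (n : ℕ) :
    qPochInf x q = qPoch x q n * qPochInf (x * q ^ n) q := by
  have h1 : Tendsto (fun m => qPoch x q (n + m)) atTop (𝓝 (qPochInf x q)) :=
    (qPoch_tendsto x q hq).comp (tendsto_add_atTop_nat n |>.congr fun m => add_comm _ _)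
  simp only [qPoch_add] at h1
  exact tendsto_nhds_unique h1 ((qPoch_tendsto (x * q ^ n) q hq).const_mul _)

lemma qPoch_norm_le (z q : ℂ) (hq : ‖q‖ < 1) (n : ℕ) :
    ‖qPoch z q n‖ ≤ Real.exp (‖z‖ * (1 - ‖q‖)⁻¹) := by
  rw [qPoch, norm_prod]
  calc ∏ j ∈ range n, ‖1 - z * q ^ j‖ ≤ ∏ j ∈ range n, Real.exp (‖z‖ * ‖q‖ ^ j) := by
        refine Finset.prod_le_prod (fun _ _ => norm_nonneg _) fun j _ => ?_
        calc ‖1 - z * q ^ j‖ ≤ ‖(1 : ℂ)‖ + ‖z * q ^ j‖ := norm_sub_le _ _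
          _ = ‖z‖ * ‖q‖ ^ j + 1 := by rw [norm_mul, norm_pow, norm_one, add_comm]
          _ ≤ _ := Real.add_one_le_exp _
    _ = Real.exp (‖z‖ * ∑ j ∈ range n, ‖q‖ ^ j) := by rw [← Real.exp_sum, Finset.mul_sum]
    _ ≤ _ := by
        apply Real.exp_le_exp.mpr
        apply mul_le_mul_of_nonneg_left _ (norm_nonneg _)
        rw [← tsum_geometric_of_lt_one (norm_nonneg _) hq]
        exact (summable_geometric_of_lt_one (norm_nonneg _) hq).sum_le_tsum _
          (fun _ _ => by positivity)

lemma PP_inv_bound (q : ℂ) (hq : ‖q‖ < 1) : ∃ C : ℝ, 1 ≤ C ∧ ∀ n, ‖(qPoch q q n)⁻¹‖ ≤ C := by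
  have h := ((qPoch_tendsto q q hq).inv₀ (qPochInf_ne q q hq hq)).norm.bddAbove_range
  obtain ⟨C, hC⟩ := h
  refine ⟨max C 1, le_max_right _ _, fun n => le_trans (hC ⟨n, rfl⟩) (le_max_left _ _)⟩

lemma tannery (f : ℕ → ℕ → ℂ) (g : ℕ → ℂ) (bound : ℕ → ℝ) (hb : Summable bound)
    (hb0 : ∀ m, 0 ≤ bound m)
    (hlim : ∀ m, Tendsto (fun M => f M m) atTop (𝓝 (g m)))
    (hle : ∀ M m, m ≤ M → ‖f M m‖ ≤ bound m) :
    Tendsto (fun M => ∑ m ∈ range (M + 1), f M m) atTop (𝓝 (∑' m, g m)) := by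
  have h := tendsto_tsum_of_dominated_convergence (𝓕 := atTop)
    (f := fun M m => if m ∈ range (M + 1) then f M m else 0) (g := g) hb ?_ ?_
  · refine h.congr fun M => ?_
    rw [tsum_eq_sum (s := range (M + 1)) (fun b hb => by rw [if_neg hb])]
    exact Finset.sum_congr rfl fun m hm => by rw [if_pos hm]
  · intro m
    refine (hlim m).congr' ?_
    filter_upwards [eventually_ge_atTop m] with M hM
    rw [if_pos (by simp; omega)]
  · refine Eventually.of_forall fun M m => ?_
    split_ifs with hm
    · exact hle M m (by simp at hm; omega)
    · simpa using hb0 m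

lemma tendsto_sub_nat (m : ℕ) : Tendsto (fun M : ℕ => M - m) atTop atTop :=
  tendsto_sub_atTop_nat m

lemma qgauss_inf (q : ℂ) (hq : ‖q‖ < 1) (x y : ℂ) (hy : ‖y‖ < 1) :
    ∑' m : ℕ, ((-y) ^ m * q ^ (m.choose 2) * qPoch x q m * qPochInf (x * y * q ^ m) q) / qPoch q q m
      = qPochInf y q := by
  obtain ⟨C, hC1, hC⟩ := PP_inv_bound q hq
  have hP := qPoch_ne q q hq hq
  have hPi := qPochInf_ne q q hq hq
  have hPt := qPoch_tendsto q q hq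
  set E1 := Real.exp (‖x‖ * (1 - ‖q‖)⁻¹)
  set E2 := Real.exp (‖x * y‖ * (1 - ‖q‖)⁻¹)
  have hpos : 0 ≤ (1 - ‖q‖)⁻¹ := inv_nonneg.mpr (by linarith)
  have h1 := tannery (fun M m => ((-y) ^ m * q ^ (m.choose 2) * qPoch x q m *
      qPoch (x * y * q ^ m) q (M - m)) / (qPoch q q m * qPoch q q (M - m)))
    (fun m => ((-y) ^ m * q ^ (m.choose 2) * qPoch x q m *
      qPochInf (x * y * q ^ m) q) / (qPoch q q m * qPochInf q q))
    (fun m => ‖y‖ ^ m * (1 * E1 * E2 * (C * C)))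
    ((summable_geometric_of_lt_one (norm_nonneg _) hy).mul_right _)
    (fun m => by positivity)
    (fun m => by
      refine Tendsto.div (Tendsto.const_mul _ ?_) (Tendsto.const_mul _ ?_) (mul_ne_zero (hP m) hPi)
      · exact (qPoch_tendsto _ q hq).comp (tendsto_sub_nat m)
      · exact hPt.comp (tendsto_sub_nat m))
    (fun M m hm => by
      rw [div_eq_mul_inv, mul_inv, norm_mul, norm_mul, norm_mul, norm_mul, norm_mul, norm_pow, norm_neg, norm_pow]
      have a1 : ‖q‖ ^ (m.choose 2) ≤ 1 := pow_le_one₀ (norm_nonneg _) hq.le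
      have a2 := qPoch_norm_le x q hq m
      have a3 : ‖qPoch (x * y * q ^ m) q (M - m)‖ ≤ E2 := by
        refine (qPoch_norm_le _ q hq _).trans (Real.exp_le_exp.mpr ?_)
        apply mul_le_mul_of_nonneg_right _ hpos
        rw [norm_mul (x * y), norm_pow]
        exact mul_le_of_le_one_right (norm_nonneg _) (pow_le_one₀ (norm_nonneg _) hq.le)
      have a4 := hC m
      have a5 := hC (M - m)
      rw [mul_assoc, mul_assoc, mul_assoc]
      refine mul_le_mul_of_nonneg_left ?_ (by positivity)
      rw [← mul_assoc, ← mul_assoc]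
      gcongr)
  simp only [qgauss_fin q hq] at h1
  have h2 := (qPoch_tendsto y q hq).div hPt hPi
  have h3 := tendsto_nhds_unique h1 h2
  simp only [← div_div] at h3
  rw [tsum_div_const, div_left_inj' hPi] at h3
  exact h3

lemma jtp (p u v : ℂ) (hp : ‖p‖ < 1) (hu : ‖u‖ < 1) (hv : ‖v‖ < 1) (hp0 : p ≠ 0) (huv : u * v = p) :
    ∑' r, jc p u v r = qPochInf p p * qPochInf u p * qPochInf v p := by
  obtain ⟨C, hC1, hC⟩ := PP_inv_bound p hp
  have hu0 : u ≠ 0 := by rintro rfl; simp at huv; exact hp0 huv.symm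
  have hP := qPoch_ne p p hp hp
  have hPi := qPochInf_ne p p hp hp
  have hPt := qPoch_tendsto p p hp
  have h1 := tannery (fun M m => jc p u v m / (qPoch p p (M - m) * qPoch p p (M + m)))
    (fun m => jc p u v m / (qPochInf p p * qPochInf p p))
    (fun m => (‖u‖ ^ m + ‖v‖ ^ m) * (C * C))
    (((summable_geometric_of_lt_one (norm_nonneg _) hu).add
      (summable_geometric_of_lt_one (norm_nonneg _) hv)).mul_right _)
    (fun m => by positivity)
    (fun m => by
      refine Tendsto.div tendsto_const_nhds (Tendsto.mul ?_ ?_) (mul_ne_zero hPi hPi)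
      · exact hPt.comp (tendsto_sub_nat m)
      · exact hPt.comp (tendsto_add_atTop_nat m))
    (fun M m hm => by
      rw [div_eq_mul_inv, mul_inv, norm_mul, norm_mul]
      have a4 := hC (M - m)
      have a5 := hC (M + m)
      have a6 : ‖jc p u v m‖ ≤ ‖u‖ ^ m + ‖v‖ ^ m := by
        rw [jc]
        split_ifs with h
        · simp [h]
        · rw [norm_mul, norm_mul, norm_pow, norm_neg, norm_one, one_pow, one_mul, norm_pow]
          have a1 : ‖p‖ ^ (m.choose 2) ≤ 1 := pow_le_one₀ (norm_nonneg _) hp.le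
          have a2 : ‖u ^ m + v ^ m‖ ≤ ‖u‖ ^ m + ‖v‖ ^ m := by
            refine (norm_add_le _ _).trans ?_
            rw [norm_pow, norm_pow]
          calc _ ≤ 1 * (‖u‖ ^ m + ‖v‖ ^ m) := by gcongr
            _ = _ := one_mul _
      gcongr)
  simp only [jtp_fin p u v hp hu0 hp0 huv] at h1
  have h2 := ((qPoch_tendsto u p hp).mul (qPoch_tendsto v p hp)).div
    (hPt.comp (tendsto_id.const_mul_atTop' (show 0 < 2 by norm_num))) hPi
  have h3 := tendsto_nhds_unique h1 h2
  rw [tsum_div_const] at h3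
  field_simp at h3
  rw [h3]

lemma jc_summable (p v : ℂ) (hp : ‖p‖ < 1) (hv : ‖v‖ < 1) :
    Summable fun r => (-1 : ℂ) ^ r * p ^ (r.choose 2) * v ^ r := by
  refine Summable.of_norm_bounded (summable_geometric_of_lt_one (norm_nonneg _) hv) fun r => ?_
  rw [norm_mul, norm_mul, norm_pow, norm_neg, norm_one, one_pow, one_mul, norm_pow, norm_pow]
  exact mul_le_of_le_one_left (by positivity) (pow_le_one₀ (norm_nonneg _) hp.le)

lemma tri_tsum (F : ℕ → ℕ → ℂ) (hF : Summable fun x : ℕ × ℕ => F x.1 x.2) :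
    ∑' a, ∑ b ∈ range (a + 1), F b (a - b) = ∑' b, ∑' m, F b m := by
  rw [← hF.tsum_prod' (fun b => hF.prod_factor b),
    ← Finset.HasAntidiagonal.sigmaAntidiagonalEquivProd.tsum_eq]
  refine Eq.trans ?_ (Summable.tsum_sigma' (fun n => (hasSum_fintype _).summable)
    (Finset.HasAntidiagonal.sigmaAntidiagonalEquivProd.summable_iff.mpr hF)).symm
  refine tsum_congr fun n => ?_
  rw [tsum_fintype, ← Finset.Nat.sum_antidiagonal_eq_sum_range_succ F n, ← Finset.sum_coe_sort]
  rfl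

lemma poch_two (q : ℂ) (n : ℕ) :
    qPoch (-q) q (2 * n) = qPoch (-q) (q ^ 2) n * qPoch (-(q ^ 2)) (q ^ 2) n := by
  induction n with
  | zero => simp [qPoch_zero]
  | succ n ih =>
    rw [show 2 * (n + 1) = 2 * n + 1 + 1 by ring, qPoch_succ, qPoch_succ, qPoch_succ, qPoch_succ, ih]
    ring

lemma norm_sq_lt (q : ℂ) (hq : ‖q‖ < 1) : ‖q ^ 2‖ < 1 := by
  rw [norm_pow]; exact pow_lt_one₀ (norm_nonneg _) hq (by norm_num)

lemma euler_prod (q : ℂ) (hq : ‖q‖ < 1) :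
    qPochInf (-(q ^ 2)) (q ^ 2) * qPochInf (-q) (q ^ 2) / qPochInf (q ^ 2) (q ^ 2) = 1 / qPochInf q q := by
  have hQ := norm_sq_lt q hq
  have h2 : Tendsto (fun n : ℕ => 2 * n) atTop atTop :=
    tendsto_id.const_mul_atTop' (show 0 < 2 by norm_num)
  have e : ∀ n, qPoch q q n * qPoch (-q) q n = qPoch (q ^ 2) (q ^ 2) n := by
    intro n
    simp only [qPoch, ← Finset.prod_mul_distrib]
    refine Finset.prod_congr rfl fun j _ => ?_
    ring
  have l1 := ((qPoch_tendsto q q hq).mul (qPoch_tendsto (-q) q hq))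
  simp only [e] at l1
  have l2 := tendsto_nhds_unique l1 (qPoch_tendsto (q ^ 2) (q ^ 2) hQ)
  have l3 := (qPoch_tendsto (-q) q hq).comp h2
  have l4 := (qPoch_tendsto (-q) (q ^ 2) hQ).mul (qPoch_tendsto (-(q ^ 2)) (q ^ 2) hQ)
  have l5 := tendsto_nhds_unique l3 (l4.congr fun n => (poch_two q n).symm)
  have n1 := qPochInf_ne q q hq hq
  have n2 := qPochInf_ne (-q) q (by simpa using hq) hq
  rw [← l2, l5] 
  rw [l5] at n2
  have n3 := left_ne_zero_of_mul n2
  have n4 := right_ne_zero_of_mul n2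
  field_simp

lemma geo_summable (q : ℂ) (hq : ‖q‖ < 1) (C : ℝ) :
    Summable fun x : ℕ × ℕ => (C * ((x.1 + 1 : ℝ) * ‖q‖ ^ x.1)) * ‖q‖ ^ x.2 := by
  have g := summable_geometric_of_lt_one (norm_nonneg _) hq
  have g1 : Summable fun b : ℕ => ((b : ℝ) + 1) * ‖q‖ ^ b := by
    have := summable_pow_mul_geometric_of_norm_lt_one (R := ℝ) 1 (r := ‖q‖) (by simpa using hq)
    refine (this.add g).congr fun b => ?_
    ring
  have h := g1.mul_of_nonneg g (fun b => by positivity) (fun b => by positivity)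
  refine (h.mul_left C).congr fun x => ?_
  ring

lemma final_sum (q : ℂ) (hq : ‖q‖ < 1) (e : ℕ) (A f : ℕ → ℂ) (K : ℝ) (hA : ∀ r, ‖A r‖ ≤ K)
    (hf : ∀ n, f n = ∑ r ∈ range (n + 1), A r / (qPoch (q ^ 2) (q ^ 2) (n - r) *
      qPoch (q ^ 2) (q ^ 2) (n + r + e))) :
    ∑' a, ∑ b ∈ range (a + 1), q ^ (a ^ 2 + (a - b)) / qPoch (q ^ 2) (q ^ 2) (a - b) *
      (qPoch (-q) q (2 * b) * q ^ (2 * e * b) * f b) =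
    qPochInf (-(q ^ 2)) (q ^ 2) / qPochInf (q ^ 2) (q ^ 2) *
      ∑' r, A r * q ^ (r ^ 2 + 2 * e * r) * qPoch (-q) (q ^ 2) r *
        qPochInf (-q ^ (2 * r + 2 * e + 1)) (q ^ 2) := by
  have hQ := norm_sq_lt q hq
  obtain ⟨C, hC1, hC⟩ := PP_inv_bound (q ^ 2) hQ
  have hP := qPoch_ne _ _ hQ hQ
  have hK : 0 ≤ K := (norm_nonneg _).trans (hA 0)
  have hle : ∀ a b : ℕ, b ≤ a → ‖q ^ a‖ ≤ ‖q‖ ^ b := fun a b hab => by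
    rw [norm_pow]; exact pow_le_pow_of_le_one (norm_nonneg _) hq.le hab
  have hfb : ∀ n, ‖f n‖ ≤ (n + 1) * (K * (C * C)) := by
    intro n
    rw [hf]
    have hb : ∀ r ∈ range (n + 1), ‖A r / (qPoch (q ^ 2) (q ^ 2) (n - r) *
      qPoch (q ^ 2) (q ^ 2) (n + r + e))‖ ≤ K * (C * C) := fun r _ => ?_
    refine (norm_sum_le_of_le _ hb).trans ?_
    rotate_left
    · rw [div_eq_mul_inv, mul_inv, norm_mul, norm_mul]
      have := hA r
      have := hC (n - r)
      have := hC (n + r + e)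
      gcongr
    · simp
  obtain ⟨F, hF⟩ : ∃ F : ℕ → ℕ → ℂ, ∀ b m, F b m = q ^ ((b + m) ^ 2 + m) /
      qPoch (q ^ 2) (q ^ 2) m * (qPoch (-q) q (2 * b) * q ^ (2 * e * b) * f b) :=
    ⟨_, fun _ _ => rfl⟩
  obtain ⟨H, hH⟩ : ∃ H : ℕ → ℕ → ℂ, ∀ r m, H r m = A r * (qPoch (-q) (q ^ 2) (r + m) *
        q ^ ((r + m) ^ 2 + 2 * e * (r + m))) / (qPoch (q ^ 2) (q ^ 2) m *
          qPoch (q ^ 2) (q ^ 2) (m + (2 * r + e))) :=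
    ⟨_, fun _ _ => rfl⟩
  have s1 : ∀ a, ∑ b ∈ range (a + 1), q ^ (a ^ 2 + (a - b)) / qPoch (q ^ 2) (q ^ 2) (a - b) *
      (qPoch (-q) q (2 * b) * q ^ (2 * e * b) * f b) =
      ∑ b ∈ range (a + 1), F b (a - b) := by
    intro a
    refine Finset.sum_congr rfl fun b hb => ?_
    have : b + (a - b) = a := by simp at hb; omega
    rw [hF, this]
  rw [tsum_congr s1, tri_tsum F]
  swap
  · refine Summable.of_norm_bounded (geo_summable q hq
      (C * (Real.exp (‖-q‖ * (1 - ‖q‖)⁻¹) * 1 * (K * (C * C))))) fun x => ?_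
    obtain ⟨b, m⟩ := x
    simp only
    rw [hF, div_eq_mul_inv, norm_mul, norm_mul, norm_mul, norm_mul]
    have a1 : ‖q ^ ((b + m) ^ 2 + m)‖ ≤ ‖q‖ ^ (b + m) := hle _ _ (by nlinarith)
    have a2 := hC m
    have a3 := qPoch_norm_le (-q) q hq (2 * b)
    have a4 : ‖q ^ (2 * e * b)‖ ≤ 1 := by simpa using hle (2 * e * b) 0 (Nat.zero_le _)
    have a5 := hfb b
    calc _ ≤ ‖q‖ ^ (b + m) * C * (Real.exp (‖-q‖ * (1 - ‖q‖)⁻¹) * 1 * ((b + 1) * (K * (C * C)))) := by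
          gcongr
      _ = _ := by ring
  have s2 : ∀ b, ∑' m, F b m =
      qPochInf (-(q ^ 2)) (q ^ 2) * ∑ r ∈ range (b + 1), H r (b - r) := by
    intro b
    simp only [hF]
    rw [tsum_mul_right]
    have hy : ‖-((q ^ 2) ^ (b + 1))‖ < 1 := by
      rw [norm_neg, norm_pow]; exact pow_lt_one₀ (norm_nonneg _) hQ (by omega)
    have g := qgauss_inf (q ^ 2) hQ 0 (-((q ^ 2) ^ (b + 1))) hy
    have z1 : ∀ m, qPoch 0 (q ^ 2) m = 1 := fun m => by simp [qPoch]
    have z2 : qPochInf 0 (q ^ 2) = 1 := by simp [qPochInf]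
    simp only [zero_mul, z1, z2, mul_one, neg_neg] at g
    have t1 : ∀ m, q ^ ((b + m) ^ 2 + m) / qPoch (q ^ 2) (q ^ 2) m = q ^ (b ^ 2) *
        (((q ^ 2) ^ (b + 1)) ^ m * (q ^ 2) ^ (m.choose 2) / qPoch (q ^ 2) (q ^ 2) m) := by
      intro m
      rw [← mul_div_assoc, ← pow_mul, ← pow_mul, ← pow_mul, ← pow_add, ← pow_add]
      congr 2
      have := two_choose m
      nlinarith
    simp only [t1]
    rw [tsum_mul_left, g, qPochInf_split (-(q ^ 2)) _ hQ b, poch_two, hf,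
      show -q ^ 2 * (q ^ 2) ^ b = -((q ^ 2) ^ (b + 1)) by ring]
    have t2 : ∀ r ∈ range (b + 1), H r (b - r) =
        qPoch (-q) (q ^ 2) b * q ^ (b ^ 2) * q ^ (2 * e * b) * (A r / (qPoch (q ^ 2) (q ^ 2) (b - r) *
      qPoch (q ^ 2) (q ^ 2) (b + r + e))) := by
      intro r hr
      have hr' : r ≤ b := by simp at hr; omega
      rw [hH, show r + (b - r) = b by omega, show b - r + (2 * r + e) = b + r + e by omega, pow_add]
      ring
    rw [Finset.sum_congr rfl t2, ← Finset.mul_sum]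
    ring
  rw [tsum_congr s2, tsum_mul_left, tri_tsum H, div_mul_eq_mul_div, mul_div_assoc, ← tsum_div_const]
  swap
  · refine Summable.of_norm_bounded (geo_summable q hq
      (K * (Real.exp (‖-q‖ * (1 - ‖q ^ 2‖)⁻¹)) * (C * C))) fun x => ?_
    obtain ⟨r, m⟩ := x
    simp only
    rw [hH, div_eq_mul_inv, mul_inv, norm_mul, norm_mul, norm_mul, norm_mul]
    have a1 : ‖q ^ ((r + m) ^ 2 + 2 * e * (r + m))‖ ≤ ‖q‖ ^ (r + m) := hle _ _ (by nlinarith)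
    have a2 := hC m
    have a3 := qPoch_norm_le (-q) (q ^ 2) hQ (r + m)
    have a4 := hC (m + (2 * r + e))
    have a5 := hA r
    calc _ ≤ K * (Real.exp (‖-q‖ * (1 - ‖q ^ 2‖)⁻¹) * ‖q‖ ^ (r + m)) * (C * C) := by
          gcongr
      _ = (K * (Real.exp (‖-q‖ * (1 - ‖q ^ 2‖)⁻¹)) * (C * C) * (1 * ‖q‖ ^ r)) * ‖q‖ ^ m := by ring
      _ ≤ _ := by
          gcongr
          linarith [(Nat.cast_nonneg r : (0 : ℝ) ≤ r)]
  congr 1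
  refine tsum_congr fun r => ?_
  have hPi := qPochInf_ne _ _ hQ hQ
  have hy : ‖-q ^ (2 * r + 2 * e + 1)‖ < 1 := by
    rw [norm_neg, norm_pow]; exact pow_lt_one₀ (norm_nonneg _) hq (by omega)
  have g := qgauss_inf (q ^ 2) hQ (-q ^ (2 * r + 1)) (-q ^ (2 * r + 2 * e + 1)) hy
  rw [mul_div_assoc, mul_assoc, ← mul_div_assoc, mul_div_assoc, ← g, ← tsum_div_const, ← tsum_mul_left, ← tsum_mul_left]
  refine tsum_congr fun m => ?_
  rw [hH]
  have hs := qPochInf_split (q ^ 2) (q ^ 2) hQ (m + (2 * r + e))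
  have e1 : q ^ 2 * (q ^ 2) ^ (m + (2 * r + e)) =
    -q ^ (2 * r + 1) * -q ^ (2 * r + 2 * e + 1) * (q ^ 2) ^ m := by ring
  rw [e1] at hs
  have e2 : q ^ ((r + m) ^ 2 + 2 * e * (r + m)) = q ^ (r ^ 2 + 2 * e * r) *
      ((q ^ (2 * r + 2 * e + 1)) ^ m * (q ^ 2) ^ (m.choose 2)) := by
    rw [← pow_mul, ← pow_mul, ← pow_add, ← pow_add]
    congr 1
    have := two_choose m
    nlinarith
  rw [e2, qPoch_add, neg_neg, show -q * (q ^ 2) ^ r = -q ^ (2 * r + 1) by ring]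
  rw [hs] at hPi ⊢
  have n1 := left_ne_zero_of_mul hPi
  have n2 := right_ne_zero_of_mul hPi
  have n3 := hP m
  clear hs g
  generalize qPochInf (-q ^ (2 * r + 1) * -q ^ (2 * r + 2 * e + 1) * (q ^ 2) ^ m) (q ^ 2) = Z at *
  field_simp

def tupExt (k : ℕ) (s : Fin k → ℕ) (m : ℕ) : ℕ := if h : m < k then s ⟨m, h⟩ else 0

def tupCons {k : ℕ} (n : ℕ) (s : Fin k → ℕ) : Fin (k + 1) → ℕ := Fin.cons n s

lemma tupExt_cons_zero (k n : ℕ) (s : Fin k → ℕ) : tupExt (k + 1) (tupCons n s) 0 = n := by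
  simp [tupExt, tupCons]

lemma tupExt_cons_succ (k n : ℕ) (s : Fin k → ℕ) (m : ℕ) :
    tupExt (k + 1) (tupCons n s) (m + 1) = tupExt k s m := by
  unfold tupExt tupCons
  by_cases h : m < k
  · rw [dif_pos h, dif_pos (by omega)]
    rfl
  · rw [dif_neg h, dif_neg (by omega)]

lemma tupCons_inj {k : ℕ} (n : ℕ) (s s' : Fin k → ℕ) (h : tupCons n s = tupCons n s') : s = s' :=
  Fin.cons_right_injective (α := fun _ => ℕ) n h

def Fs : (k : ℕ) → ℕ → Finset (Fin k → ℕ)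
  | 0, n => if n = 0 then {default} else ∅
  | k + 1, n => (range (n + 1)).biUnion fun b => (Fs k b).image (tupCons n)

lemma antitone_tupCons (k n : ℕ) (s : Fin k → ℕ) :
    Antitone (tupCons n s) ↔ Antitone s ∧ tupExt k s 0 ≤ n := by
  constructor
  · intro h
    refine ⟨fun a b hab => h (Fin.succ_le_succ_iff.mpr hab), ?_⟩
    unfold tupExt
    split_ifs with hk
    · exact h (Fin.zero_le (Fin.succ ⟨0, hk⟩))
    · omega
  · rintro ⟨h, h0⟩ a b hab
    induction a using Fin.cases with
    | zero =>
      induction b using Fin.cases with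
      | zero => exact le_rfl
      | succ b =>
        have hk : 0 < k := b.pos
        simp only [tupExt, hk, dif_pos] at h0
        refine le_trans ?_ h0
        exact h (show (⟨0, hk⟩ : Fin k) ≤ b from Nat.zero_le _)
    | succ a =>
      induction b using Fin.cases with
      | zero => exact absurd hab (by simp)
      | succ b => exact h (Fin.succ_le_succ_iff.mp hab)

lemma mem_Fs (k : ℕ) : ∀ (n : ℕ) (s : Fin k → ℕ), s ∈ Fs k n ↔ Antitone s ∧ tupExt k s 0 = n := by
  induction k with
  | zero =>
    intro n s
    have h1 : Antitone s := fun a => a.elim0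
    have h2 : s = default := Subsingleton.elim _ _
    by_cases hn : n = 0
    · subst hn
      simp [Fs, h2, tupExt]
      exact fun a => a.elim0
    · simp [Fs, hn, tupExt]
      intro _
      exact Ne.symm hn
  | succ k ih =>
    intro n s
    simp only [Fs, mem_biUnion, mem_image, mem_range]
    constructor
    · rintro ⟨b, hb, s', hs', rfl⟩
      rw [ih] at hs'
      exact ⟨(antitone_tupCons k n s').2 ⟨hs'.1, by omega⟩, tupExt_cons_zero k n s'⟩
    · rintro ⟨h, h0⟩
      have hs : s = tupCons n (Fin.tail s) := by
        have : n = s 0 := by rw [← h0]; simp [tupExt]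
        rw [this]
        exact (Fin.cons_self_tail s).symm
      rw [hs, antitone_tupCons] at h
      exact ⟨_, by omega, Fin.tail s, (ih _ _).2 ⟨h.1, rfl⟩, hs.symm⟩

lemma card_Fs (k : ℕ) : ∀ n, (Fs k n).card ≤ (n + 1) ^ k := by
  induction k with
  | zero => intro n; by_cases hn : n = 0 <;> simp [Fs, hn]
  | succ k ih =>
    intro n
    refine card_biUnion_le.trans ?_
    calc _ ≤ ∑ b ∈ range (n + 1), (n + 1) ^ k := by
          refine sum_le_sum fun b hb => (card_image_le.trans (ih b)).trans ?_
          simp at hb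
          exact Nat.pow_le_pow_left (by omega) k
      _ = _ := by simp [pow_succ, mul_comm]

noncomputable def GG (K : ℕ → ℕ → ℕ → ℂ) : ℕ → ℕ → ℕ → ℂ
  | _, 0, n => if n = 0 then 1 else 0
  | m0, j + 1, n => ∑ b ∈ range (n + 1), K m0 n b * GG K (m0 + 1) j b

lemma sum_Fs (K : ℕ → ℕ → ℕ → ℂ) (k : ℕ) : ∀ m0 n, ∑ s ∈ Fs k n,
    ∏ m ∈ range k, K (m0 + m) (tupExt k s m) (tupExt k s (m + 1)) = GG K m0 k n := by
  induction k with
  | zero => intro m0 n; by_cases hn : n = 0 <;> simp [Fs, GG, hn]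
  | succ k ih =>
    intro m0 n
    rw [Fs, sum_biUnion, GG]
    · refine sum_congr rfl fun b _ => ?_
      rw [sum_image fun s _ s' _ h => tupCons_inj n s s' h, ← ih, mul_sum]
      refine sum_congr rfl fun s hs => ?_
      rw [prod_range_succ', mul_comm, add_zero]
      simp only [tupExt_cons_succ, tupExt_cons_zero]
      rw [((mem_Fs k b s).1 hs).2]
      congr 1
      refine prod_congr rfl fun m _ => ?_
      rw [show m0 + (m + 1) = m0 + 1 + m by omega]
    · intro b _ b' _ hbb
      refine disjoint_left.mpr fun s hs hs' => hbb ?_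
      simp only [mem_image] at hs hs'
      obtain ⟨x, hx, rfl⟩ := hs
      obtain ⟨y, hy, hxy⟩ := hs'
      have := tupCons_inj n y x hxy
      subst this
      rw [← ((mem_Fs k b y).1 hx).2, ((mem_Fs k b' y).1 hy).2]

def FsEquiv (k : ℕ) : (Σ n, {s // s ∈ Fs k n}) ≃ {s : Fin k → ℕ // Antitone s} where
  toFun x := ⟨x.2.1, ((mem_Fs k x.1 x.2.1).1 x.2.2).1⟩
  invFun s := ⟨tupExt k s.1 0, s.1, (mem_Fs k _ s.1).2 ⟨s.2, rfl⟩⟩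
  left_inv := by
    rintro ⟨n, s, hs⟩
    obtain ⟨h1, h2⟩ := (mem_Fs k n s).1 hs
    subst h2
    rfl
  right_inv := fun s => rfl

lemma tsum_tuples (k : ℕ) (T : (Fin k → ℕ) → ℂ) (C ρ : ℝ) (hρ0 : 0 ≤ ρ) (hρ : ρ < 1)
    (hT : ∀ s, ‖T s‖ ≤ C * ρ ^ (tupExt k s 0)) :
    ∑' s : {s : Fin k → ℕ // Antitone s}, T s.1 = ∑' n, ∑ s ∈ Fs k n, T s := by
  rw [← (FsEquiv k).tsum_eq]
  have hC : 0 ≤ C := by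
    have := (norm_nonneg _).trans (hT (fun _ => 0))
    have h0 : tupExt k (fun _ => 0) 0 = 0 := by simp [tupExt]
    rw [h0] at this
    simpa using this
  have hsum : Summable fun x : (Σ n, {s // s ∈ Fs k n}) => T (FsEquiv k x).1 := by
    refine Summable.of_norm_bounded (g := fun x => C * ρ ^ x.1) ?_ ?_
    · rw [summable_sigma_of_nonneg (fun x => by positivity)]
      refine ⟨fun n => (hasSum_fintype _).summable, ?_⟩
      have h1 := summable_pow_mul_geometric_of_norm_lt_one (R := ℝ) k (r := ρ)
        (by rwa [Real.norm_eq_abs, abs_of_nonneg hρ0])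
      have h2 := summable_geometric_of_lt_one hρ0 hρ
      refine Summable.of_nonneg_of_le (fun n => tsum_nonneg fun _ => by positivity) (fun n => ?_)
        (((h1.add h2).mul_left (2 ^ k * C)))
      rw [tsum_fintype]
      simp only [sum_const, card_univ, Fintype.card_coe, nsmul_eq_mul]
      have hc : ((Fs k n).card : ℝ) ≤ 2 ^ k * ((n : ℝ) ^ k + 1) := by
        have : ((Fs k n).card : ℝ) ≤ ((n : ℝ) + 1) ^ k := by exact_mod_cast card_Fs k n
        refine this.trans ?_
        rcases Nat.eq_zero_or_pos n with rfl | hn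
        · have : (1 : ℝ) ≤ 2 ^ k := one_le_pow₀ (by norm_num)
          have h3 : (0 : ℝ) ≤ (0 : ℝ) ^ k := by positivity
          simp only [Nat.cast_zero, zero_add, one_pow]
          nlinarith
        · have hn' : (1 : ℝ) ≤ n := by exact_mod_cast hn
          calc ((n : ℝ) + 1) ^ k ≤ (2 * n) ^ k := by gcongr; linarith
            _ = 2 ^ k * (n : ℝ) ^ k := mul_pow _ _ _
            _ ≤ _ := by gcongr; linarith
      calc _ ≤ 2 ^ k * ((n : ℝ) ^ k + 1) * (C * ρ ^ n) := by gcongr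
        _ = _ := by ring
    · rintro ⟨n, s, hs⟩
      have := hT s
      rwa [((mem_Fs k n s).1 hs).2] at this
  refine (Summable.tsum_sigma' (fun n => (hasSum_fintype _).summable) hsum).trans ?_
  refine tsum_congr fun n => ?_
  rw [tsum_fintype]
  exact Finset.sum_coe_sort (Fs k n) T

noncomputable def KK (q : ℂ) (i m a b : ℕ) : ℂ :=
  (if m = 0 then q ^ (a ^ 2 + (a - b)) else if m = 1 then qPoch (-q) q (2 * a)
    else q ^ (2 * a ^ 2)) * q ^ (2 * (if i ≤ m then a else 0)) / qPoch (q ^ 2) (q ^ 2) (a - b)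

lemma prod_KK (q : ℂ) (i κ : ℕ) (t : ℕ → ℕ) :
    ∏ m ∈ range (κ + 2), KK q i m (t m) (t (m + 1)) =
      qPoch (-q) q (2 * t 1) *
         q ^ ((t 0) ^ 2 + 2 * ∑ m ∈ Finset.Ico 2 (κ + 2), (t m) ^ 2 + (t 0 - t 1) +
              2 * ∑ m ∈ Finset.Ico i (κ + 2), t m) /
         ∏ m ∈ Finset.range (κ + 2), qPoch (q ^ 2) (q ^ 2) (t m - t (m + 1)) := by
  unfold KK
  rw [prod_div_distrib, prod_mul_distrib, prod_pow_eq_pow_sum, ← mul_sum, ← sum_filter]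
  have h1 : (range (κ + 2)).filter (fun m => i ≤ m) = Ico i (κ + 2) := by
    ext m; simp; omega
  have h2 : ∑ m ∈ Ico 2 (κ + 2), (t m) ^ 2 = ∑ m ∈ range κ, (t (m + 2)) ^ 2 := by
    rw [sum_Ico_eq_sum_range]
    refine sum_congr (by simp) fun m _ => ?_
    rw [add_comm]
  rw [h1, h2, prod_range_succ', prod_range_succ']
  congr 1
  have h3 : ∀ m ∈ range κ, (if m + 1 + 1 = 0 then q ^ ((t (m + 1 + 1)) ^ 2 + (t (m + 1 + 1) - t (m + 1 + 1 + 1)))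
      else if m + 1 + 1 = 1 then qPoch (-q) q (2 * t (m + 1 + 1)) else q ^ (2 * t (m + 1 + 1) ^ 2)) =
      q ^ (2 * t (m + 2) ^ 2) := by
    intro m _
    rw [if_neg (by omega), if_neg (by omega)]
  rw [prod_congr rfl h3, prod_pow_eq_pow_sum, ← mul_sum]
  simp only [zero_add, one_ne_zero, if_false, if_true]
  rw [pow_add q (_ + _) (2 * _), pow_add q (_ + _) (_ - _), pow_add q (_ ^ 2), pow_add q (_ ^ 2)]
  ring

lemma GG_ff (q : ℂ) (k i : ℕ) : ∀ (j m0 : ℕ), m0 + j = k → 2 ≤ m0 → ∀ n,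
    GG (KK q i) m0 j n = (q ^ 2) ^ (n ^ 2 + (if j ≤ k - i then 1 else 0) * n) * ff (q ^ 2) (k - i) j n := by
  intro j
  induction j with
  | zero =>
    intro m0 _ _ n
    by_cases hn : n = 0 <;> simp [GG, ff, hn]
  | succ j ih =>
    intro m0 h h2 n
    rw [GG, ff, mul_sum]
    refine sum_congr rfl fun b _ => ?_
    rw [ih (m0 + 1) (by omega) (by omega), KK, if_neg (by omega), if_neg (by omega)]
    have : (if i ≤ m0 then n else 0) = (if j + 1 ≤ k - i then 1 else 0) * n := by
      by_cases hh : i ≤ m0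
      · rw [if_pos hh, if_pos (by omega), one_mul]
      · rw [if_neg hh, if_neg (by omega), zero_mul]
    rw [this, pow_add (q ^ 2) (n ^ 2), pow_mul q 2 (n ^ 2), pow_mul q 2]
    ring

lemma main_sum (q : ℂ) (hq : ‖q‖ < 1) (κ i : ℕ) (hi1 : 1 ≤ i) :
    ∑' s : {s : Fin (κ + 2) → ℕ // Antitone s},
      qPoch (-q) q (2 * tupExt (κ + 2) s.1 1) *
         q ^ ((tupExt (κ + 2) s.1 0) ^ 2 + 2 * ∑ m ∈ Finset.Ico 2 (κ + 2), (tupExt (κ + 2) s.1 m) ^ 2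
           + (tupExt (κ + 2) s.1 0 - tupExt (κ + 2) s.1 1) +
              2 * ∑ m ∈ Finset.Ico i (κ + 2), tupExt (κ + 2) s.1 m) /
         ∏ m ∈ Finset.range (κ + 2), qPoch (q ^ 2) (q ^ 2)
          (tupExt (κ + 2) s.1 m - tupExt (κ + 2) s.1 (m + 1)) =
    ∑' a, ∑ b ∈ range (a + 1), q ^ (a ^ 2 + (a - b)) / qPoch (q ^ 2) (q ^ 2) (a - b) *
      (qPoch (-q) q (2 * b) * q ^ (2 * (if i ≤ 1 then 1 else 0) * b) *
        ff (q ^ 2) (κ + 2 - i) (κ + 1) b) := by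
  have hQ := norm_sq_lt q hq
  obtain ⟨C, hC1, hC⟩ := PP_inv_bound (q ^ 2) hQ
  have key := tsum_tuples (κ + 2) (fun s => qPoch (-q) q (2 * tupExt (κ + 2) s 1) *
         q ^ ((tupExt (κ + 2) s 0) ^ 2 + 2 * ∑ m ∈ Finset.Ico 2 (κ + 2), (tupExt (κ + 2) s m) ^ 2
           + (tupExt (κ + 2) s 0 - tupExt (κ + 2) s 1) +
              2 * ∑ m ∈ Finset.Ico i (κ + 2), tupExt (κ + 2) s m) /
         ∏ m ∈ Finset.range (κ + 2), qPoch (q ^ 2) (q ^ 2)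
          (tupExt (κ + 2) s m - tupExt (κ + 2) s (m + 1)))
      (Real.exp (‖-q‖ * (1 - ‖q‖)⁻¹) * C ^ (κ + 2)) ‖q‖ (norm_nonneg _) hq ?_
  swap
  · intro s
    generalize tupExt (κ + 2) s = t
    rw [div_eq_mul_inv, norm_mul, norm_mul, ← prod_inv_distrib, norm_prod]
    have a1 := qPoch_norm_le (-q) q hq (2 * t 1)
    have a2 : ‖q ^ ((t 0) ^ 2 + 2 * ∑ m ∈ Finset.Ico 2 (κ + 2), (t m) ^ 2 + (t 0 - t 1) +
              2 * ∑ m ∈ Finset.Ico i (κ + 2), t m)‖ ≤ ‖q‖ ^ t 0 := by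
      rw [norm_pow]
      refine pow_le_pow_of_le_one (norm_nonneg _) hq.le ?_
      have : t 0 ≤ t 0 ^ 2 := Nat.le_self_pow (by norm_num) _
      omega
    have a3 : ∏ m ∈ range (κ + 2), ‖(qPoch (q ^ 2) (q ^ 2) (t m - t (m + 1)))⁻¹‖ ≤ C ^ (κ + 2) := by
      refine (prod_le_prod (fun _ _ => norm_nonneg _) fun m _ => hC _).trans ?_
      simp
    calc _ ≤ Real.exp (‖-q‖ * (1 - ‖q‖)⁻¹) * ‖q‖ ^ t 0 * C ^ (κ + 2) := by
          have : 0 ≤ ∏ m ∈ range (κ + 2), ‖(qPoch (q ^ 2) (q ^ 2) (t m - t (m + 1)))⁻¹‖ :=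
            prod_nonneg fun _ _ => norm_nonneg _
          gcongr
      _ = _ := by ring
  refine key.trans (tsum_congr fun a => ?_)
  simp only [← prod_KK]
  have h := sum_Fs (KK q i) (κ + 2) 0 a
  simp only [zero_add] at h
  rw [h, GG]
  refine sum_congr rfl fun b _ => ?_
  rw [GG, KK, if_pos rfl, if_neg (by omega), mul_zero, pow_zero, mul_one, ff]
  congr 1
  rw [mul_sum]
  refine sum_congr rfl fun c _ => ?_
  rw [GG_ff q (κ + 2) i κ (0 + 1 + 1) (by omega) (by omega), KK, if_neg (by omega), if_pos (by omega)]
  have : 2 * (if i ≤ 0 + 1 then b else 0) = 2 * (if i ≤ 1 then 1 else 0) * b := by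
    split_ifs <;> simp_all
  rw [this]
  ring

lemma al_bound (Q : ℂ) (hQ : ‖Q‖ < 1) (j r : ℕ) : ‖al Q j r‖ ≤ 1 := by
  rw [al, norm_mul, norm_pow, norm_neg, norm_one, one_pow, one_mul, norm_pow]
  exact pow_le_one₀ (norm_nonneg _) hQ.le

lemma qfold_bound (Q : ℂ) (hQ : ‖Q‖ < 1) (j r : ℕ) : ‖qfold Q (al Q j) r‖ ≤ 2 := by
  cases r with
  | zero => rw [qfold]; linarith [al_bound Q hQ j 0]
  | succ r =>
    rw [qfold]
    refine (norm_sub_le _ _).trans ?_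
    have h1 := al_bound Q hQ j (r + 1)
    have h2 : ‖Q ^ (2 * r + 1) * al Q j r‖ ≤ 1 := by
      rw [norm_mul, norm_pow]
      exact mul_le_one₀ (pow_le_one₀ (norm_nonneg _) hQ.le) (norm_nonneg _) (al_bound Q hQ j r)
    linarith

lemma term_E (q : ℂ) (j l r : ℕ) :
    qfold (q ^ 2) (al (q ^ 2) j) r * (q ^ 2) ^ (l * r ^ 2) * q ^ (r ^ 2) =
      jc (q ^ (4 * (j + l + 1))) (q ^ (2 * l + 3)) (q ^ (4 * j + 2 * l + 1)) r := by
  cases r with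
  | zero => simp [qfold, al, jc]
  | succ r =>
    rw [qfold, jc, if_neg (by omega), al, al]
    have hr := two_choose r
    have hc : (r + 1).choose 2 = r.choose 2 + r := by
      have := two_choose (r + 1)
      nlinarith
    generalize (r + 1).choose 2 = c' at *
    generalize r.choose 2 = c at *
    subst hc
    have e1 : (q ^ 2) ^ (c + r + j * ((r + 1) ^ 2 + (r + 1))) * (q ^ 2) ^ (l * (r + 1) ^ 2) * q ^ ((r + 1) ^ 2) =
        (q ^ (4 * (j + l + 1))) ^ (c + r) * (q ^ (4 * j + 2 * l + 1)) ^ (r + 1) := by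
      simp only [← pow_mul, ← pow_add]
      congr 1
      have : c * 2 + r = r ^ 2 := by omega
      zify at this ⊢
      linear_combination (1 - 2 * ((j : ℤ) + l + 1)) * this
    have e2 : (q ^ 2) ^ (2 * r + 1) * (q ^ 2) ^ (c + j * (r ^ 2 + r)) * (q ^ 2) ^ (l * (r + 1) ^ 2) * q ^ ((r + 1) ^ 2) =
        (q ^ (4 * (j + l + 1))) ^ (c + r) * (q ^ (2 * l + 3)) ^ (r + 1) := by
      simp only [← pow_mul, ← pow_add]
      congr 1
      have : c * 2 + r = r ^ 2 := by omega
      zify at this ⊢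
      linear_combination (1 - 2 * ((j : ℤ) + l + 1)) * this
    linear_combination (-1) ^ (r + 1) * e1 - (-1) ^ r * e2

lemma jc_tele (p u v : ℂ) (hp : ‖p‖ < 1) (hu : ‖u‖ < 1) (hv : ‖v‖ < 1) :
    ∑' r, ((-1) ^ r * p ^ (r.choose 2) * v ^ r - (-1) ^ r * p ^ ((r + 1).choose 2) * u ^ (r + 1)) =
    ∑' r, jc p u v r := by
  have sg := jc_summable p u hp hu
  have sv := jc_summable p v hp hv
  have sg1 := (summable_nat_add_iff 1).mpr sg
  have sη : Summable fun r : ℕ => (-1) ^ r * p ^ ((r + 1).choose 2) * u ^ (r + 1) := by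
    refine sg1.neg.congr fun r => ?_
    ring
  obtain ⟨δ, hδ⟩ : ∃ δ : ℕ → ℂ, ∀ r, δ r = if r = 0 then 0 else (-1) ^ r * p ^ (r.choose 2) * u ^ r :=
    ⟨_, fun _ => rfl⟩
  have hδ1 : ∀ r, δ (r + 1) = -((-1) ^ r * p ^ ((r + 1).choose 2) * u ^ (r + 1)) := fun r => by
    rw [hδ, if_neg (by omega)]; ring
  have sδ : Summable δ := by
    refine (summable_nat_add_iff 1).mp (sη.neg.congr fun r => ?_)
    rw [hδ1]
  have hj : ∀ r, jc p u v r = (-1) ^ r * p ^ (r.choose 2) * v ^ r + δ r := fun r => by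
    rw [jc, hδ]
    by_cases h : r = 0
    · simp [h]
    · rw [if_neg h, if_neg h]; ring
  rw [tsum_congr hj, sv.tsum_sub sη, sv.tsum_add sδ, sδ.tsum_eq_zero_add, tsum_congr hδ1, tsum_neg,
    hδ 0, if_pos rfl, zero_add, sub_eq_add_neg]

lemma term_D (q : ℂ) (κ r : ℕ) :
    al (q ^ 2) (κ + 1) r * (1 - q ^ (2 * r + 1)) * q ^ (r ^ 2 + 2 * 1 * r) =
      (-1) ^ r * (q ^ (4 * (κ + 2))) ^ (r.choose 2) * (q ^ (4 * κ + 7)) ^ r -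
      (-1) ^ r * (q ^ (4 * (κ + 2))) ^ ((r + 1).choose 2) * q ^ (r + 1) := by
  rw [al]
  have hr := two_choose r
  have hc : (r + 1).choose 2 = r.choose 2 + r := by
    have := two_choose (r + 1)
    nlinarith
  generalize (r + 1).choose 2 = c' at *
  generalize r.choose 2 = c at *
  subst hc
  have e1 : (q ^ 2) ^ (c + (κ + 1) * (r ^ 2 + r)) * q ^ (r ^ 2 + 2 * 1 * r) =
      (q ^ (4 * (κ + 2))) ^ c * (q ^ (4 * κ + 7)) ^ r := by
    simp only [← pow_mul, ← pow_add]
    congr 1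
    have : c * 2 + r = r ^ 2 := by omega
    zify at this ⊢
    linear_combination (1 - 2 * ((κ : ℤ) + 2)) * this
  have e2 : (q ^ 2) ^ (c + (κ + 1) * (r ^ 2 + r)) * q ^ (2 * r + 1) * q ^ (r ^ 2 + 2 * 1 * r) =
      (q ^ (4 * (κ + 2))) ^ (c + r) * q ^ (r + 1) := by
    simp only [← pow_mul, ← pow_add]
    congr 1
    have : c * 2 + r = r ^ 2 := by omega
    zify at this ⊢
    linear_combination (1 - 2 * ((κ : ℤ) + 2)) * this
  linear_combination (-1) ^ r * e1 - (-1) ^ r * e2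

lemma case_E (q : ℂ) (hq0 : q ≠ 0) (hq : ‖q‖ < 1) (κ i : ℕ) (hi : 2 ≤ i) (hik : i ≤ κ + 2) :
    ∑' a, ∑ b ∈ range (a + 1), q ^ (a ^ 2 + (a - b)) / qPoch (q ^ 2) (q ^ 2) (a - b) *
      (qPoch (-q) q (2 * b) * q ^ (2 * 0 * b) * ff (q ^ 2) (κ + 2 - i) (κ + 1) b) =
    qPochInf (q ^ (4 * (κ + 2))) (q ^ (4 * (κ + 2))) * qPochInf (q ^ (2 * i - 1)) (q ^ (4 * (κ + 2))) *
        qPochInf (q ^ (4 * (κ + 2) - 2 * i + 1)) (q ^ (4 * (κ + 2))) / qPochInf q q := by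
  have hQ := norm_sq_lt q hq
  obtain ⟨l, rfl⟩ : ∃ l, i = l + 2 := ⟨i - 2, by omega⟩
  obtain ⟨J, rfl⟩ : ∃ J, κ = J + l := ⟨κ - l, by omega⟩
  have hlt : ∀ n, n ≠ 0 → ‖q ^ n‖ < 1 := fun n hn => by
    rw [norm_pow]; exact pow_lt_one₀ (norm_nonneg _) hq hn
  rw [final_sum q hq 0 (fun r => qfold (q ^ 2) (al (q ^ 2) (J + 1)) r * (q ^ 2) ^ (l * r ^ 2)) _ 2]
  rotate_left
  · intro r
    rw [norm_mul, norm_pow]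
    have := qfold_bound (q ^ 2) hQ (J + 1) r
    have h2 : ‖q ^ 2‖ ^ (l * r ^ 2) ≤ 1 := pow_le_one₀ (norm_nonneg _) hQ.le
    nlinarith [norm_nonneg (qfold (q ^ 2) (al (q ^ 2) (J + 1)) r)]
  · intro n
    rw [show J + l + 2 - (l + 2) = J by omega, show J + l + 1 = J + 1 + l by omega,
      ff_E _ hQ (pow_ne_zero 2 hq0)]
    rfl
  have h : ∀ r, qfold (q ^ 2) (al (q ^ 2) (J + 1)) r * (q ^ 2) ^ (l * r ^ 2) * q ^ (r ^ 2 + 2 * 0 * r) *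
      qPoch (-q) (q ^ 2) r * qPochInf (-q ^ (2 * r + 2 * 0 + 1)) (q ^ 2) =
      qPochInf (-q) (q ^ 2) * jc (q ^ (4 * (J + 1 + l + 1))) (q ^ (2 * l + 3)) (q ^ (4 * (J + 1) + 2 * l + 1)) r := by
    intro r
    rw [← term_E, qPochInf_split (-q) _ hQ r, show -q * (q ^ 2) ^ r = -q ^ (2 * r + 2 * 0 + 1) by ring]
    ring
  rw [tsum_congr h, tsum_mul_left, jtp _ _ _ (hlt _ (by omega)) (hlt _ (by omega)) (hlt _ (by omega))
    (pow_ne_zero _ hq0) (by rw [← pow_add]; congr 1; omega)]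
  have := euler_prod q hq
  rw [show 2 * (l + 2) - 1 = 2 * l + 3 by omega, show J + l + 2 = J + 1 + l + 1 by omega,
    show 4 * (J + 1 + l + 1) - 2 * (l + 2) + 1 = 4 * (J + 1) + 2 * l + 1 by omega]
  linear_combination (qPochInf (q ^ (4 * (J + 1 + l + 1))) (q ^ (4 * (J + 1 + l + 1))) *
    qPochInf (q ^ (2 * l + 3)) (q ^ (4 * (J + 1 + l + 1))) *
    qPochInf (q ^ (4 * (J + 1) + 2 * l + 1)) (q ^ (4 * (J + 1 + l + 1)))) * this

lemma case_D (q : ℂ) (hq0 : q ≠ 0) (hq : ‖q‖ < 1) (κ : ℕ) :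
    ∑' a, ∑ b ∈ range (a + 1), q ^ (a ^ 2 + (a - b)) / qPoch (q ^ 2) (q ^ 2) (a - b) *
      (qPoch (-q) q (2 * b) * q ^ (2 * 1 * b) * ff (q ^ 2) (κ + 2 - 1) (κ + 1) b) =
    qPochInf (q ^ (4 * (κ + 2))) (q ^ (4 * (κ + 2))) * qPochInf (q ^ (2 * 1 - 1)) (q ^ (4 * (κ + 2))) *
        qPochInf (q ^ (4 * (κ + 2) - 2 * 1 + 1)) (q ^ (4 * (κ + 2))) / qPochInf q q := by
  have hQ := norm_sq_lt q hq
  have hlt : ∀ n, n ≠ 0 → ‖q ^ n‖ < 1 := fun n hn => by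
    rw [norm_pow]; exact pow_lt_one₀ (norm_nonneg _) hq hn
  rw [final_sum q hq 1 (fun r => al (q ^ 2) (κ + 1) r * (1 - (q ^ 2) ^ (2 * r + 1))) _ 2]
  rotate_left
  · intro r
    rw [norm_mul]
    have := al_bound (q ^ 2) hQ (κ + 1) r
    have h2 : ‖1 - (q ^ 2) ^ (2 * r + 1)‖ ≤ 2 := by
      refine (norm_sub_le _ _).trans ?_
      rw [norm_pow, norm_one]
      have : ‖q ^ 2‖ ^ (2 * r + 1) ≤ 1 := pow_le_one₀ (norm_nonneg _) hQ.le
      linarith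
    nlinarith [norm_nonneg (al (q ^ 2) (κ + 1) r), norm_nonneg (1 - (q ^ 2) ^ (2 * r + 1))]
  · intro n
    rw [ff_D _ hQ (pow_ne_zero 2 hq0) _ _ (by omega)]
  have h : ∀ r, al (q ^ 2) (κ + 1) r * (1 - (q ^ 2) ^ (2 * r + 1)) * q ^ (r ^ 2 + 2 * 1 * r) *
      qPoch (-q) (q ^ 2) r * qPochInf (-q ^ (2 * r + 2 * 1 + 1)) (q ^ 2) =
      qPochInf (-q) (q ^ 2) * ((-1) ^ r * (q ^ (4 * (κ + 2))) ^ (r.choose 2) * (q ^ (4 * κ + 7)) ^ r -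
      (-1) ^ r * (q ^ (4 * (κ + 2))) ^ ((r + 1).choose 2) * q ^ (r + 1)) := by
    intro r
    rw [← term_D, qPochInf_split (-q) _ hQ (r + 1), qPoch_succ,
      show -q * (q ^ 2) ^ (r + 1) = -q ^ (2 * r + 2 * 1 + 1) by ring,
      show -q * (q ^ 2) ^ r = -q ^ (2 * r + 1) by ring,
      show (q ^ 2) ^ (2 * r + 1) = q ^ (2 * r + 1) * q ^ (2 * r + 1) by ring]
    ring
  rw [tsum_congr h, tsum_mul_left, jc_tele _ q _ (hlt _ (by omega)) hq (hlt _ (by omega)),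
    jtp _ _ _ (hlt _ (by omega)) hq (hlt _ (by omega))
    (pow_ne_zero _ hq0) (by rw [← pow_succ']; congr 1)]
  have := euler_prod q hq
  rw [show 2 * 1 - 1 = 1 by omega, pow_one,
    show 4 * (κ + 2) - 2 * 1 + 1 = 4 * κ + 7 by omega]
  linear_combination (qPochInf (q ^ (4 * (κ + 2))) (q ^ (4 * (κ + 2))) *
    qPochInf q (q ^ (4 * (κ + 2))) * qPochInf (q ^ (4 * κ + 7)) (q ^ (4 * (κ + 2)))) * this

end

/-- A modulus `4k` identity.  The tuple `s` encodes `s_1 ≥ s_2 ≥ ⋯ ≥ s_k ≥ 0` via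
`s_m = t (m-1)`, with the convention `s_{k+1} = 0`. -/
theorem modulus_4k_identity (q : ℂ) (h0 : 0 < ‖q‖) (h1 : ‖q‖ < 1)
    (k i : ℕ) (hk : 2 ≤ k) (hi1 : 1 ≤ i) (hik : i ≤ k) :
    (∑' s : {s : Fin k → ℕ // Antitone s},
      (let t : ℕ → ℕ := fun m => if h : m < k then s.1 ⟨m, h⟩ else 0
       qPoch (-q) q (2 * t 1) *
         q ^ ((t 0) ^ 2 + 2 * ∑ m ∈ Finset.Ico 2 k, (t m) ^ 2 + (t 0 - t 1) +
              2 * ∑ m ∈ Finset.Ico i k, t m) /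
         ∏ m ∈ Finset.range k, qPoch (q ^ 2) (q ^ 2) (t m - t (m + 1)))) =
      qPochInf (q ^ (4 * k)) (q ^ (4 * k)) * qPochInf (q ^ (2 * i - 1)) (q ^ (4 * k)) *
        qPochInf (q ^ (4 * k - 2 * i + 1)) (q ^ (4 * k)) / qPochInf q q := by
  have hq0 : q ≠ 0 := norm_pos_iff.mp h0
  obtain ⟨κ, rfl⟩ : ∃ κ, k = κ + 2 := ⟨k - 2, by omega⟩
  refine (main_sum q h1 κ i hi1).trans ?_
  by_cases hi : i ≤ 1
  · obtain rfl : i = 1 := by omega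
    rw [if_pos hi]
    exact case_D q hq0 h1 κ
  · rw [if_neg hi]
    exact case_E q hq0 h1 κ i (by omega) hik
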